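/- Let (Q₁,N₁) and (Q₂,N₂) be two classical solutions of the Q-system, both existing up to time τ. Then e^{k_min·τ} · ‖∂_ηQ₁(0,·) − ∂_ηQ₂(0,·)‖_{L¹(0,1)} ≤ ‖∂_ηQ₁(τ,·) − ∂_ηQ₂(τ,·)‖_{L¹(0,1)} ≤ e^{k_max·τ} · ‖∂_ηQ₁(0,·) − ∂_ηQ₂(0,·)‖_{L¹(0,1)}. -/

import Mathlib

open Real Set MeasureTheory Filter Topology
open scoped ENNReal

noncomputable section

/-- The time interval `[0, T)` in `ℝ`, where `T : ℝ≥0∞` may be `∞`. -/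
def Ico0 (T : ℝ≥0∞) : Set ℝ := {τ : ℝ | 0 ≤ τ ∧ ENNReal.ofReal τ < T}

/-- Partial derivative in the time variable (one-sided at `τ = 0`). -/
def pdTau (Q : ℝ → ℝ → ℝ) (τ η : ℝ) : ℝ := derivWithin (fun s => Q s η) (Ici 0) τ

/-- Partial derivative in the spatial variable (one-sided at `η = 0` and `η = 1`). -/
def pdEta (Q : ℝ → ℝ → ℝ) (τ η : ℝ) : ℝ := derivWithin (fun x => Q τ x) (Icc 0 1) η

/-- Assumption 1.1: `K ∈ C²(ℝ)` with `K'`, `K''` bounded on `ℝ` and `K > 0` on `[0, Φ_F]`. -/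
structure KAssump (K : ℝ → ℝ) (ΦF : ℝ) : Prop where
  smooth : ContDiff ℝ 2 K
  bdd1 : ∃ C : ℝ, ∀ x : ℝ, |deriv K x| ≤ C
  bdd2 : ∃ C : ℝ, ∀ x : ℝ, |deriv (deriv K) x| ≤ C
  pos : ∀ φ ∈ Icc (0 : ℝ) ΦF, 0 < K φ

/-- `k_min := K'(0) + ∫₀^{Φ_F} min(K''(φ), 0) dφ`. -/
def kmin (K : ℝ → ℝ) (ΦF : ℝ) : ℝ :=
  deriv K 0 + ∫ φ in (0 : ℝ)..ΦF, min (deriv (deriv K) φ) 0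

/-- `k_max := K'(0) + ∫₀^{Φ_F} max(K''(φ), 0) dφ`. -/
def kmax (K : ℝ → ℝ) (ΦF : ℝ) : ℝ :=
  deriv K 0 + ∫ φ in (0 : ℝ)..ΦF, max (deriv (deriv K) φ) 0

/-- Assumption (A2) on the initial datum. -/
structure A2 (K : ℝ → ℝ) (ΦF : ℝ) (Qinit : ℝ → ℝ) : Prop where
  reg : ContDiffOn ℝ 1 Qinit (Icc 0 1)
  mono : MonotoneOn Qinit (Icc 0 1)
  init0 : Qinit 0 = 0
  init1 : Qinit 1 = ΦF
  deriv1 : K ΦF < derivWithin Qinit (Icc 0 1) 1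
  compat : derivWithin Qinit (Icc 0 1) 1 - derivWithin Qinit (Icc 0 1) 0 = K ΦF - K 0

/-- A classical solution `(Q, N)` of the Q-system on `[0, T)` with initial datum `Qinit`. -/
structure IsQSol (K : ℝ → ℝ) (ΦF : ℝ) (T : ℝ≥0∞) (Qinit : ℝ → ℝ)
    (Q : ℝ → ℝ → ℝ) (N : ℝ → ℝ) : Prop where
  initReg : ContDiffOn ℝ 1 Qinit (Icc 0 1)
  initMono : MonotoneOn Qinit (Icc 0 1)
  init0 : Qinit 0 = 0
  init1 : Qinit 1 = ΦF
  initDeriv : K ΦF < derivWithin Qinit (Icc 0 1) 1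
  reg : ContDiffOn ℝ 1 (Function.uncurry Q) (Ico0 T ×ˢ Icc (0 : ℝ) 1)
  mono : ∀ τ ∈ Ico0 T, MonotoneOn (Q τ) (Icc 0 1)
  Ncont : ContinuousOn N (Ico0 T)
  Npos : ∀ τ ∈ Ico0 T, 0 < N τ
  pde : ∀ τ ∈ Ico0 T, ∀ η ∈ Ioo (0 : ℝ) 1,
    pdTau Q τ η + pdEta Q τ η = 1 / N τ + K (Q τ η)
  bc : ∀ τ ∈ Ico0 T, Q τ 0 = 0
  Ndef : ∀ τ ∈ Ico0 T, 1 / N τ = pdEta Q τ 1 - K ΦF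
  init : ∀ η ∈ Icc (0 : ℝ) 1, Q 0 η = Qinit η
  constraint : ∀ τ ∈ Ico0 T, K ΦF < pdEta Q τ 1

/-- A classical solution `(Q, Ñ)` of the relaxed system on `[0, T)` with initial datum `Qinit`,
where `Ñ` is unconstrained in sign. -/
structure IsRelaxedSol (K : ℝ → ℝ) (ΦF : ℝ) (T : ℝ≥0∞) (Qinit : ℝ → ℝ)
    (Q : ℝ → ℝ → ℝ) (Ntil : ℝ → ℝ) : Prop where
  initReg : ContDiffOn ℝ 1 Qinit (Icc 0 1)
  init0 : Qinit 0 = 0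
  init1 : Qinit 1 = ΦF
  reg : ContDiffOn ℝ 1 (Function.uncurry Q) (Ico0 T ×ˢ Icc (0 : ℝ) 1)
  Ncont : ContinuousOn Ntil (Ico0 T)
  pde : ∀ τ ∈ Ico0 T, ∀ η ∈ Ioo (0 : ℝ) 1,
    pdTau Q τ η + pdEta Q τ η = Ntil τ + K (Q τ η)
  bc : ∀ τ ∈ Ico0 T, Q τ 0 = 0
  Ndef : ∀ τ ∈ Ico0 T, Ntil τ = pdEta Q τ 1 - K ΦF
  init : ∀ η ∈ Icc (0 : ℝ) 1, Q 0 η = Qinit η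

/-- A steady state `(Q*, N*)` of the Q-system. -/
def IsSteadyState (K : ℝ → ℝ) (ΦF : ℝ) (Qs : ℝ → ℝ) (Ns : ℝ) : Prop :=
  ContDiffOn ℝ 1 Qs (Icc 0 1) ∧ 0 < Ns ∧
    (∀ η ∈ Icc (0 : ℝ) 1, derivWithin Qs (Icc 0 1) η = K (Qs η) + 1 / Ns) ∧
    Qs 0 = 0 ∧ Qs 1 = ΦF

/-- `P₀ f := f - ∫₀¹ f`. -/
def P0 (f : ℝ → ℝ) (η : ℝ) : ℝ := f η - ∫ x in (0 : ℝ)..1, f x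

/-- `H_init := Q_init' - K ∘ Q_init` (derivative within `[0,1]`). -/
def Hinit (K : ℝ → ℝ) (Qinit : ℝ → ℝ) (η : ℝ) : ℝ :=
  derivWithin Qinit (Icc 0 1) η - K (Qinit η)

/-!
Let `p := ∂_η Q₁ - ∂_η Q₂`. The equation at `η = 0` gives
`∂_η Q(τ, 1) - ∂_η Q(τ, 0) = K(Φ_F) - K(0)`, so `p` is continuous on the circle `ℝ / ℤ`. At `η = 1`
it is the autonomous equation `∂_τ Q(τ, 1) = K(Q(τ, 1)) - K(Φ_F)`, whence `Q(τ, 1) = Φ_F`.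
Differentiating the equation in `η` removes `1 / N`, and integrating along the characteristics of
`∂_τ + ∂_η` on the circle yields `d/dτ ‖p‖₁ = D`, where
`D := ∫ sign(p) (K'(Q₁) ∂_η Q₁ - K'(Q₂) ∂_η Q₂)`.

To bound `D`, take first a nondecreasing `A` in place of `K'`. The integral against `sign(Q₁ - Q₂)`
of `A(Q₁) ∂_η Q₁ - A(Q₂) ∂_η Q₂` vanishes, because the latter is the derivative of `B(Q₁) - B(Q₂)`
with `B' = A`, and this difference is zero wherever `Q₁ = Q₂`, in particular at both endpoints.
Adding or subtracting it makes the integrand comparable pointwise with `|p| ± sign(Q₁ - Q₂) p`, and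
`A(0) ‖p‖₁ ≤ D ≤ A(Φ_F) ‖p‖₁` follows. Splitting `K'` into the primitives of the positive and
negative parts of `K''` gives `k_min ‖p‖₁ ≤ D ≤ k_max ‖p‖₁`, and Grönwall's inequality concludes.
-/

section SignCalculus

variable {a b : ℝ}

lemma measurable_coe_sign : Measurable fun x : ℝ => (SignType.sign x : ℝ) := by
  have sign_eq_ite (x : ℝ) :
      (SignType.sign x : ℝ) = if 0 < x then 1 else if x < 0 then -1 else 0 := by
    rw [sign_apply]
    split_ifs <;> simp
  simp only [sign_eq_ite]
  exact .ite measurableSet_Ioi measurable_const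
    (.ite measurableSet_Iio measurable_const measurable_const)

lemma abs_coe_sign_le_one (x : ℝ) : |(SignType.sign x : ℝ)| ≤ 1 := by
  rcases lt_trichotomy x 0 with hx | hx | hx <;> simp [hx]

lemma abs_sign_mul_le (x y : ℝ) : |(SignType.sign x : ℝ) * y| ≤ |y| := by
  rw [abs_mul]
  exact mul_le_of_le_one_left (abs_nonneg y) (abs_coe_sign_le_one x)

lemma intervalIntegrable_sign_mul {p f : ℝ → ℝ} (hp : ContinuousOn p (uIcc a b))
    (hf : IntervalIntegrable f volume a b) :
    IntervalIntegrable (fun x => (SignType.sign (p x) : ℝ) * f x) volume a b := by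
  have hp_meas : AEMeasurable p (volume.restrict (uIoc a b)) :=
    (hp.mono uIoc_subset_uIcc).aemeasurable measurableSet_uIoc
  rw [intervalIntegrable_iff] at hf ⊢
  exact hf.bdd_mul (measurable_coe_sign.comp_aemeasurable hp_meas).aestronglyMeasurable
    (.of_forall fun x => abs_coe_sign_le_one (p x))

lemma countable_setOf_eq_of_hasDerivAt_ne_zero (f : ℝ → ℝ) (c : ℝ) :
    {x | f x = c ∧ ∃ f' ≠ 0, HasDerivAt f f' x}.Countable := by
  refine (countable_setOfPred_isolated_right_within (s := {x | f x = c})).mono ?_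
  rintro x ⟨hx, f', hf'_ne, hf'⟩
  refine ⟨hx, empty_mem_iff_bot.1 ?_⟩
  have ne_near : ∀ᶠ z in 𝓝[{z | f z = c} ∩ Ioi x] x, f z ≠ c :=
    (hf'.eventually_ne hf'_ne).filter_mono (nhdsWithin_mono x fun z hz => ne_of_gt hz.2)
  filter_upwards [ne_near, self_mem_nhdsWithin] with z hz_ne hz
  exact hz_ne hz.1

lemma hasDerivAt_sign_mul {f d : ℝ → ℝ} {f' x : ℝ} (hf : HasDerivAt f f' x)
    (hd : ContinuousAt d x) (hf_zero : d x = 0 → f x = 0) (hf'_zero : d x = 0 → f' = 0) :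
    HasDerivAt (fun y => (SignType.sign (d y) : ℝ) * f y) (SignType.sign (d x) * f') x := by
  by_cases hdx : d x = 0
  · rw [hasDerivAt_iff_isLittleO] at hf ⊢
    simp only [hf_zero hdx, hf'_zero hdx, smul_zero, mul_zero, sub_zero] at hf ⊢
    have sign_mul_isBigO : (fun y => (SignType.sign (d y) : ℝ) * f y) =O[𝓝 x] f :=
      .of_bound' (.of_forall fun y => abs_sign_mul_le _ _)
    exact sign_mul_isBigO.trans_isLittleO hf
  · have sign_near : ∀ᶠ y in 𝓝 x, SignType.sign (d y) = SignType.sign (d x) :=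
      ((continuousAt_sign_of_ne_zero hdx).comp hd).eventually
        (isOpen_discrete {SignType.sign (d x)} |>.mem_nhds rfl)
    refine (hf.const_mul _).congr_of_eventuallyEq ?_
    filter_upwards [sign_near] with y hy
    rw [hy]

lemma continuousOn_sign_mul {f d : ℝ → ℝ} {s : Set ℝ} (hf : ContinuousOn f s)
    (hd : ContinuousOn d s) (hf_zero : ∀ x ∈ s, d x = 0 → f x = 0) :
    ContinuousOn (fun x => (SignType.sign (d x) : ℝ) * f x) s := by
  intro x hx
  by_cases hdx : d x = 0
  · have hf_tendsto : Tendsto f (𝓝[s] x) (𝓝 0) := hf_zero x hx hdx ▸ hf x hx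
    rw [ContinuousWithinAt, hdx, _root_.sign_zero, SignType.coe_zero, zero_mul]
    exact squeeze_zero_norm (fun y => abs_sign_mul_le _ _) (by simpa using hf_tendsto.abs)
  · have sign_near : ∀ᶠ y in 𝓝[s] x, SignType.sign (d y) = SignType.sign (d x) :=
      ((continuousAt_sign_of_ne_zero hdx).comp_continuousWithinAt (hd x hx)).eventually
        (isOpen_discrete {SignType.sign (d x)} |>.mem_nhds rfl)
    refine ((hf x hx).const_mul _).congr_of_eventuallyEq ?_ rfl
    filter_upwards [sign_near] with y hy
    rw [hy]

-- A zero of `d` with `d' ≠ 0` is isolated, so `sign d * f` is differentiable off a countable set.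
lemma integral_sign_mul_deriv {f f' d d' : ℝ → ℝ} {s : Set ℝ} (hab : a ≤ b) (hs : s.Countable)
    (hf_cont : ContinuousOn f (Icc a b)) (hd_cont : ContinuousOn d (Icc a b))
    (hf : ∀ x ∈ Ioo a b \ s, HasDerivAt f (f' x) x)
    (hd : ∀ x ∈ Ioo a b \ s, HasDerivAt d (d' x) x)
    (hf_zero : ∀ x ∈ Icc a b, d x = 0 → f x = 0)
    (hf'_zero : ∀ x ∈ Ioo a b, d x = 0 → d' x = 0 → f' x = 0)
    (hf'_int : IntervalIntegrable f' volume a b) :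
    ∫ x in a..b, (SignType.sign (d x) : ℝ) * f' x
      = SignType.sign (d b) * f b - SignType.sign (d a) * f a := by
  refine integral_eq_of_hasDerivAt_off_countable_of_le
    (fun x => (SignType.sign (d x) : ℝ) * f x) _ hab
    (hs.union (countable_setOf_eq_of_hasDerivAt_ne_zero d 0))
    (continuousOn_sign_mul hf_cont hd_cont hf_zero) ?_
    (intervalIntegrable_sign_mul (by rwa [uIcc_of_le hab]) hf'_int)
  rintro x ⟨hx, hx_not⟩
  rw [mem_union, not_or] at hx_not
  have hdx := hd x ⟨hx, hx_not.1⟩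
  refine hasDerivAt_sign_mul (hf x ⟨hx, hx_not.1⟩) hdx.continuousAt
    (hf_zero x (Ioo_subset_Icc_self hx)) fun hdx_zero => hf'_zero x hx hdx_zero ?_
  by_contra hd'_ne
  exact hx_not.2 ⟨hdx_zero, d' x, hd'_ne, hdx⟩

lemma integral_sign_mul_deriv_self {f f' : ℝ → ℝ} {s : Set ℝ} (hab : a ≤ b) (hs : s.Countable)
    (hf_cont : ContinuousOn f (Icc a b)) (hf : ∀ x ∈ Ioo a b \ s, HasDerivAt f (f' x) x)
    (hf'_int : IntervalIntegrable f' volume a b) :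
    ∫ x in a..b, (SignType.sign (f x) : ℝ) * f' x = |f b| - |f a| := by
  rw [integral_sign_mul_deriv hab hs hf_cont hf_cont hf hf (fun _ _ h => h) (fun _ _ _ h => h)
    hf'_int, sign_mul_self, sign_mul_self]

end SignCalculus

section StaticEstimate

variable {a b α β : ℝ} {q v q₁ q₂ v₁ v₂ A : ℝ → ℝ}

lemma abs_flux_sub_sub_min_mul (hA : Monotone A) {y₁ y₂ w₁ w₂ : ℝ} (hw₁ : 0 ≤ w₁) (hw₂ : 0 ≤ w₂) :
    |A y₁ * w₁ - A y₂ * w₂ - A (min y₁ y₂) * (w₁ - w₂)|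
      = SignType.sign (y₁ - y₂) * (A y₁ * w₁ - A y₂ * w₂ - A (min y₁ y₂) * (w₁ - w₂)) := by
  rcases lt_trichotomy y₁ y₂ with hy | rfl | hy
  · have excess_eq : A y₁ * w₁ - A y₂ * w₂ - A y₁ * (w₁ - w₂) = -((A y₂ - A y₁) * w₂) := by ring
    rw [min_eq_left hy.le, excess_eq, sign_neg (sub_neg.2 hy), abs_neg,
      abs_of_nonneg (mul_nonneg (sub_nonneg.2 (hA hy.le)) hw₂), SignType.coe_neg_one, neg_one_mul,
      neg_neg]
  · have excess_eq : A y₁ * w₁ - A y₁ * w₂ - A y₁ * (w₁ - w₂) = 0 := by ring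
    rw [min_self, excess_eq, abs_zero, mul_zero]
  · have excess_eq : A y₁ * w₁ - A y₂ * w₂ - A y₂ * (w₁ - w₂) = (A y₁ - A y₂) * w₁ := by ring
    rw [min_eq_right hy.le, excess_eq, sign_pos (sub_pos.2 hy),
      abs_of_nonneg (mul_nonneg (sub_nonneg.2 (hA hy.le)) hw₁), SignType.coe_one, one_mul]

lemma mul_abs_add_le_sign_add_mul_flux_sub (hA : Monotone A) {y₁ y₂ w₁ w₂ : ℝ} (hw₁ : 0 ≤ w₁)
    (hw₂ : 0 ≤ w₂) (hy₁ : α ≤ y₁) (hy₂ : α ≤ y₂) :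
    A α * (|w₁ - w₂| + SignType.sign (y₁ - y₂) * (w₁ - w₂))
      ≤ SignType.sign (w₁ - w₂) * (A y₁ * w₁ - A y₂ * w₂)
        + SignType.sign (y₁ - y₂) * (A y₁ * w₁ - A y₂ * w₂) := by
  have excess := abs_flux_sub_sub_min_mul hA (y₁ := y₁) (y₂ := y₂) hw₁ hw₂
  set D := A y₁ * w₁ - A y₂ * w₂ - A (min y₁ y₂) * (w₁ - w₂) with hD
  have sign_excess := (abs_le.1 (abs_sign_mul_le (w₁ - w₂) D)).1
  have weight_nonneg := (abs_le.1 (abs_sign_mul_le (y₁ - y₂) (w₁ - w₂))).1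
  have hA_min : A α ≤ A (min y₁ y₂) := hA (le_min hy₁ hy₂)
  have abs_eq := sign_mul_self (w₁ - w₂)
  calc A α * (|w₁ - w₂| + SignType.sign (y₁ - y₂) * (w₁ - w₂))
      ≤ A (min y₁ y₂) * (|w₁ - w₂| + SignType.sign (y₁ - y₂) * (w₁ - w₂)) :=
        mul_le_mul_of_nonneg_right hA_min (by linarith)
    _ ≤ A (min y₁ y₂) * (|w₁ - w₂| + SignType.sign (y₁ - y₂) * (w₁ - w₂))
        + (SignType.sign (w₁ - w₂) * D + SignType.sign (y₁ - y₂) * D) := by linarith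
    _ = _ := by rw [← abs_eq, hD]; ring

lemma sign_sub_mul_flux_sub_le_mul_abs_sub (hA : Monotone A) {y₁ y₂ w₁ w₂ : ℝ} (hw₁ : 0 ≤ w₁)
    (hw₂ : 0 ≤ w₂) (hy₁ : y₁ ≤ β) :
    SignType.sign (w₁ - w₂) * (A y₁ * w₁ - A y₂ * w₂)
        - SignType.sign (y₁ - y₂) * (A y₁ * w₁ - A y₂ * w₂)
      ≤ A β * (|w₁ - w₂| - SignType.sign (y₁ - y₂) * (w₁ - w₂)) := by
  have excess := abs_flux_sub_sub_min_mul hA (y₁ := y₁) (y₂ := y₂) hw₁ hw₂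
  set D := A y₁ * w₁ - A y₂ * w₂ - A (min y₁ y₂) * (w₁ - w₂) with hD
  have sign_excess := (abs_le.1 (abs_sign_mul_le (w₁ - w₂) D)).2
  have weight_nonneg := (abs_le.1 (abs_sign_mul_le (y₁ - y₂) (w₁ - w₂))).2
  have hA_min : A (min y₁ y₂) ≤ A β := hA ((min_le_left _ _).trans hy₁)
  have abs_eq := sign_mul_self (w₁ - w₂)
  calc SignType.sign (w₁ - w₂) * (A y₁ * w₁ - A y₂ * w₂)
        - SignType.sign (y₁ - y₂) * (A y₁ * w₁ - A y₂ * w₂)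
      = A (min y₁ y₂) * (|w₁ - w₂| - SignType.sign (y₁ - y₂) * (w₁ - w₂))
        + (SignType.sign (w₁ - w₂) * D - SignType.sign (y₁ - y₂) * D) := by rw [← abs_eq, hD]; ring
    _ ≤ A (min y₁ y₂) * (|w₁ - w₂| - SignType.sign (y₁ - y₂) * (w₁ - w₂)) := by linarith
    _ ≤ A β * (|w₁ - w₂| - SignType.sign (y₁ - y₂) * (w₁ - w₂)) :=
        mul_le_mul_of_nonneg_right hA_min (by linarith)

/-- `q` is a nondecreasing `C¹` function on `[a, b]` with derivative `v`, running from `α` to `β`.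
The solutions of the Q-system are of this kind at each time, with `[a, b] = [0, 1]`, `α = 0` and
`β = Φ_F`. -/
structure IsMonotoneProfile (a b α β : ℝ) (q v : ℝ → ℝ) : Prop where
  hasDerivWithinAt : ∀ x ∈ Icc a b, HasDerivWithinAt q (v x) (Icc a b) x
  continuousOn_deriv : ContinuousOn v (Icc a b)
  deriv_nonneg : ∀ x ∈ Icc a b, 0 ≤ v x
  eq_left : q a = α
  eq_right : q b = β

namespace IsMonotoneProfile

lemma continuousOn (h : IsMonotoneProfile a b α β q v) : ContinuousOn q (Icc a b) :=
  fun x hx => (h.hasDerivWithinAt x hx).continuousWithinAt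

lemma hasDerivAt (h : IsMonotoneProfile a b α β q v) {x : ℝ} (hx : x ∈ Ioo a b) :
    HasDerivAt q (v x) x :=
  (h.hasDerivWithinAt x (Ioo_subset_Icc_self hx)).hasDerivAt (Icc_mem_nhds hx.1 hx.2)

lemma monotoneOn (h : IsMonotoneProfile a b α β q v) : MonotoneOn q (Icc a b) := by
  refine monotoneOn_of_hasDerivWithinAt_nonneg (f' := v) (convex_Icc a b) h.continuousOn ?_ ?_
  · intro x hx
    exact (h.hasDerivWithinAt x (interior_subset hx)).mono interior_subset
  · exact fun x hx => h.deriv_nonneg x (interior_subset hx)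

lemma left_le (h : IsMonotoneProfile a b α β q v) {x : ℝ} (hx : x ∈ Icc a b) : α ≤ q x :=
  h.eq_left ▸ h.monotoneOn (left_mem_Icc.2 (hx.1.trans hx.2)) hx hx.1

lemma le_right (h : IsMonotoneProfile a b α β q v) {x : ℝ} (hx : x ∈ Icc a b) : q x ≤ β :=
  h.eq_right ▸ h.monotoneOn hx (right_mem_Icc.2 (hx.1.trans hx.2)) hx.2

lemma continuousOn_flux (h : IsMonotoneProfile a b α β q v) (hA : Continuous A) :
    ContinuousOn (fun x => A (q x) * v x) (Icc a b) :=
  (hA.comp_continuousOn h.continuousOn).mul h.continuousOn_deriv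

lemma continuousOn_sub (h₁ : IsMonotoneProfile a b α β q₁ v₁)
    (h₂ : IsMonotoneProfile a b α β q₂ v₂) : ContinuousOn (fun x => q₁ x - q₂ x) (Icc a b) :=
  h₁.continuousOn.sub h₂.continuousOn

lemma intervalIntegrable_sign_mul_flux_sub (h₁ : IsMonotoneProfile a b α β q₁ v₁)
    (h₂ : IsMonotoneProfile a b α β q₂ v₂) (hab : a ≤ b) (hA : Continuous A) {p : ℝ → ℝ}
    (hp : ContinuousOn p (Icc a b)) :
    IntervalIntegrable (fun x => (SignType.sign (p x) : ℝ) * (A (q₁ x) * v₁ x - A (q₂ x) * v₂ x))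
      volume a b := by
  rw [← uIcc_of_le hab] at hp
  refine intervalIntegrable_sign_mul hp (ContinuousOn.intervalIntegrable ?_)
  rw [uIcc_of_le hab]
  exact (h₁.continuousOn_flux hA).sub (h₂.continuousOn_flux hA)

lemma integral_sign_sub_mul_flux_sub_eq_zero (h₁ : IsMonotoneProfile a b α β q₁ v₁)
    (h₂ : IsMonotoneProfile a b α β q₂ v₂) (hab : a ≤ b) (hA : Continuous A) :
    ∫ x in a..b, (SignType.sign (q₁ x - q₂ x) : ℝ) * (A (q₁ x) * v₁ x - A (q₂ x) * v₂ x) = 0 := by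
  let B : ℝ → ℝ := fun y => ∫ z in (0 : ℝ)..y, A z
  have hB (y : ℝ) : HasDerivAt B (A y) y := hA.integral_hasStrictDerivAt 0 y |>.hasDerivAt
  have hB_cont : Continuous B := continuous_iff_continuousAt.2 fun y => (hB y).continuousAt
  rw [integral_sign_mul_deriv (f := fun x => B (q₁ x) - B (q₂ x)) (d' := fun x => v₁ x - v₂ x)
    hab countable_empty]
  · simp only [h₁.eq_left, h₂.eq_left, h₁.eq_right, h₂.eq_right, sub_self, mul_zero]
  · exact (hB_cont.comp_continuousOn h₁.continuousOn).sub
      (hB_cont.comp_continuousOn h₂.continuousOn)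
  · exact h₁.continuousOn_sub h₂
  · intro x hx
    exact ((hB _).comp x (h₁.hasDerivAt hx.1)).sub ((hB _).comp x (h₂.hasDerivAt hx.1))
  · exact fun x hx => (h₁.hasDerivAt hx.1).sub (h₂.hasDerivAt hx.1)
  · intro x _ hq
    rw [sub_eq_zero.1 hq, sub_self]
  · intro x _ hq hv
    rw [sub_eq_zero.1 hq, sub_eq_zero.1 hv, sub_self]
  · refine ContinuousOn.intervalIntegrable ?_
    rw [uIcc_of_le hab]
    exact (h₁.continuousOn_flux hA).sub (h₂.continuousOn_flux hA)

lemma continuousOn_deriv_sub (h₁ : IsMonotoneProfile a b α β q₁ v₁)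
    (h₂ : IsMonotoneProfile a b α β q₂ v₂) : ContinuousOn (fun x => v₁ x - v₂ x) (Icc a b) :=
  h₁.continuousOn_deriv.sub h₂.continuousOn_deriv

lemma intervalIntegrable_abs_deriv_sub (h₁ : IsMonotoneProfile a b α β q₁ v₁)
    (h₂ : IsMonotoneProfile a b α β q₂ v₂) (hab : a ≤ b) :
    IntervalIntegrable (fun x => |v₁ x - v₂ x|) volume a b := by
  refine ContinuousOn.intervalIntegrable ?_
  rw [uIcc_of_le hab]
  exact (h₁.continuousOn_deriv_sub h₂).abs

lemma intervalIntegrable_sign_sub_mul_deriv_sub (h₁ : IsMonotoneProfile a b α β q₁ v₁)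
    (h₂ : IsMonotoneProfile a b α β q₂ v₂) (hab : a ≤ b) :
    IntervalIntegrable (fun x => (SignType.sign (q₁ x - q₂ x) : ℝ) * (v₁ x - v₂ x))
      volume a b := by
  simpa only [one_mul] using h₁.intervalIntegrable_sign_mul_flux_sub h₂ hab
    (A := fun _ => 1) continuous_const (h₁.continuousOn_sub h₂)

lemma integral_sign_sub_mul_deriv_sub_eq_zero (h₁ : IsMonotoneProfile a b α β q₁ v₁)
    (h₂ : IsMonotoneProfile a b α β q₂ v₂) (hab : a ≤ b) :
    ∫ x in a..b, (SignType.sign (q₁ x - q₂ x) : ℝ) * (v₁ x - v₂ x) = 0 := by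
  simpa only [one_mul] using h₁.integral_sign_sub_mul_flux_sub_eq_zero h₂ hab
    (A := fun _ => 1) continuous_const

lemma mul_integral_abs_le_of_monotone (h₁ : IsMonotoneProfile a b α β q₁ v₁)
    (h₂ : IsMonotoneProfile a b α β q₂ v₂) (hab : a ≤ b) (hA : Continuous A)
    (hA_mono : Monotone A) :
    A α * ∫ x in a..b, |v₁ x - v₂ x|
      ≤ ∫ x in a..b, (SignType.sign (v₁ x - v₂ x) : ℝ) * (A (q₁ x) * v₁ x - A (q₂ x) * v₂ x) := by
  have int_abs := h₁.intervalIntegrable_abs_deriv_sub h₂ hab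
  have int_sign := h₁.intervalIntegrable_sign_sub_mul_deriv_sub h₂ hab
  have int_flux := h₁.intervalIntegrable_sign_mul_flux_sub h₂ hab hA
    (h₁.continuousOn_deriv_sub h₂)
  have int_flux' := h₁.intervalIntegrable_sign_mul_flux_sub h₂ hab hA
    (h₁.continuousOn_sub h₂)
  have mono := intervalIntegral.integral_mono_on hab ((int_abs.add int_sign).const_mul (A α))
    (int_flux.add int_flux') fun x hx => mul_abs_add_le_sign_add_mul_flux_sub hA_mono
      (h₁.deriv_nonneg x hx) (h₂.deriv_nonneg x hx) (h₁.left_le hx) (h₂.left_le hx)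
  rwa [intervalIntegral.integral_const_mul, intervalIntegral.integral_add int_abs int_sign,
    intervalIntegral.integral_add int_flux int_flux',
    h₁.integral_sign_sub_mul_deriv_sub_eq_zero h₂ hab,
    h₁.integral_sign_sub_mul_flux_sub_eq_zero h₂ hab hA, add_zero, add_zero] at mono

lemma le_mul_integral_abs_of_monotone (h₁ : IsMonotoneProfile a b α β q₁ v₁)
    (h₂ : IsMonotoneProfile a b α β q₂ v₂) (hab : a ≤ b) (hA : Continuous A)
    (hA_mono : Monotone A) :
    ∫ x in a..b, (SignType.sign (v₁ x - v₂ x) : ℝ) * (A (q₁ x) * v₁ x - A (q₂ x) * v₂ x)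
      ≤ A β * ∫ x in a..b, |v₁ x - v₂ x| := by
  have int_abs := h₁.intervalIntegrable_abs_deriv_sub h₂ hab
  have int_sign := h₁.intervalIntegrable_sign_sub_mul_deriv_sub h₂ hab
  have int_flux := h₁.intervalIntegrable_sign_mul_flux_sub h₂ hab hA
    (h₁.continuousOn_deriv_sub h₂)
  have int_flux' := h₁.intervalIntegrable_sign_mul_flux_sub h₂ hab hA
    (h₁.continuousOn_sub h₂)
  have mono := intervalIntegral.integral_mono_on hab (int_flux.sub int_flux')
    ((int_abs.sub int_sign).const_mul (A β)) fun x hx => sign_sub_mul_flux_sub_le_mul_abs_sub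
      hA_mono (h₁.deriv_nonneg x hx) (h₂.deriv_nonneg x hx) (h₁.le_right hx)
  rwa [intervalIntegral.integral_const_mul, intervalIntegral.integral_sub int_abs int_sign,
    intervalIntegral.integral_sub int_flux int_flux',
    h₁.integral_sign_sub_mul_deriv_sub_eq_zero h₂ hab,
    h₁.integral_sign_sub_mul_flux_sub_eq_zero h₂ hab hA, sub_zero, sub_zero] at mono

lemma integral_sign_mul_flux_sub_mem_Icc {A₁ A₂ : ℝ → ℝ} (h₁ : IsMonotoneProfile a b α β q₁ v₁)
    (h₂ : IsMonotoneProfile a b α β q₂ v₂) (hab : a ≤ b) (hA₁ : Continuous A₁)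
    (hA₁_mono : Monotone A₁) (hA₂ : Continuous A₂) (hA₂_mono : Monotone A₂)
    (hA : ∀ y, A y = A₁ y - A₂ y) :
    ∫ x in a..b, (SignType.sign (v₁ x - v₂ x) : ℝ) * (A (q₁ x) * v₁ x - A (q₂ x) * v₂ x) ∈
      Icc ((A₁ α - A₂ β) * ∫ x in a..b, |v₁ x - v₂ x|)
        ((A₁ β - A₂ α) * ∫ x in a..b, |v₁ x - v₂ x|) := by
  have split : ∫ x in a..b, (SignType.sign (v₁ x - v₂ x) : ℝ)
        * (A (q₁ x) * v₁ x - A (q₂ x) * v₂ x)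
      = (∫ x in a..b, (SignType.sign (v₁ x - v₂ x) : ℝ)
          * (A₁ (q₁ x) * v₁ x - A₁ (q₂ x) * v₂ x))
        - ∫ x in a..b, (SignType.sign (v₁ x - v₂ x) : ℝ)
          * (A₂ (q₁ x) * v₁ x - A₂ (q₂ x) * v₂ x) := by
    rw [← intervalIntegral.integral_sub
      (h₁.intervalIntegrable_sign_mul_flux_sub h₂ hab hA₁ (h₁.continuousOn_deriv_sub h₂))
      (h₁.intervalIntegrable_sign_mul_flux_sub h₂ hab hA₂ (h₁.continuousOn_deriv_sub h₂))]
    congr 1 with x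
    rw [hA, hA]
    ring
  rw [split, sub_mul, sub_mul]
  exact ⟨sub_le_sub (h₁.mul_integral_abs_le_of_monotone h₂ hab hA₁ hA₁_mono)
      (h₁.le_mul_integral_abs_of_monotone h₂ hab hA₂ hA₂_mono),
    sub_le_sub (h₁.le_mul_integral_abs_of_monotone h₂ hab hA₁ hA₁_mono)
      (h₁.mul_integral_abs_le_of_monotone h₂ hab hA₂ hA₂_mono)⟩

end IsMonotoneProfile

lemma continuous_primitive_of_continuous {g : ℝ → ℝ} (hg : Continuous g) (c : ℝ) :
    Continuous fun y => ∫ x in c..y, g x :=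
  intervalIntegral.continuous_primitive (fun _ _ => hg.intervalIntegrable _ _) c

lemma monotone_primitive_of_nonneg {g : ℝ → ℝ} (hg : Continuous g) (hg_nonneg : ∀ x, 0 ≤ g x)
    (c : ℝ) : Monotone fun y => ∫ x in c..y, g x :=
  monotone_of_hasDerivAt_nonneg (fun y => (hg.integral_hasStrictDerivAt c y).hasDerivAt) hg_nonneg

lemma IsMonotoneProfile.integral_sign_mul_deriv_comp_sub_mem_Icc {K : ℝ → ℝ} {ΦF : ℝ}
    (hK : ContDiff ℝ 2 K) (h₁ : IsMonotoneProfile a b 0 ΦF q₁ v₁)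
    (h₂ : IsMonotoneProfile a b 0 ΦF q₂ v₂) (hab : a ≤ b) :
    ∫ x in a..b, (SignType.sign (v₁ x - v₂ x) : ℝ)
        * (deriv K (q₁ x) * v₁ x - deriv K (q₂ x) * v₂ x) ∈
      Icc (kmin K ΦF * ∫ x in a..b, |v₁ x - v₂ x|) (kmax K ΦF * ∫ x in a..b, |v₁ x - v₂ x|) := by
  have hK' : ContDiff ℝ 1 (deriv K) := hK.deriv'
  have hK''_cont : Continuous (deriv (deriv K)) := hK'.continuous_deriv le_rfl
  let pos : ℝ → ℝ := fun y => max (deriv (deriv K) y) 0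
  let neg : ℝ → ℝ := fun y => -min (deriv (deriv K) y) 0
  have pos_cont : Continuous pos := hK''_cont.max continuous_const
  have neg_cont : Continuous neg := (hK''_cont.min continuous_const).neg
  have deriv_eq (y : ℝ) :
      deriv K y = (deriv K 0 + ∫ x in (0 : ℝ)..y, pos x) - ∫ x in (0 : ℝ)..y, neg x := by
    have ftc : ∫ x in (0 : ℝ)..y, deriv (deriv K) x = deriv K y - deriv K 0 :=
      intervalIntegral.integral_deriv_eq_sub (fun x _ => hK'.differentiable one_ne_zero x)
        (hK''_cont.intervalIntegrable _ _)
    rw [add_sub_assoc, ← intervalIntegral.integral_sub (pos_cont.intervalIntegrable _ _)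
      (neg_cont.intervalIntegrable _ _)]
    simp only [pos, neg, sub_neg_eq_add, max_add_min, add_zero, ftc]
    ring
  have bounds := h₁.integral_sign_mul_flux_sub_mem_Icc h₂ hab
    (A₁ := fun y => deriv K 0 + ∫ x in (0 : ℝ)..y, pos x)
    (continuous_const.add (continuous_primitive_of_continuous pos_cont 0))
    ((monotone_primitive_of_nonneg pos_cont (fun _ => le_max_right _ _) 0).const_add _)
    (continuous_primitive_of_continuous neg_cont 0)
    (monotone_primitive_of_nonneg neg_cont (fun _ => neg_nonneg.2 (min_le_right _ _)) 0) deriv_eq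
  simpa only [pos, neg, intervalIntegral.integral_neg, intervalIntegral.integral_same, add_zero,
    sub_zero, sub_neg_eq_add, kmin, kmax] using bounds

end StaticEstimate

section PeriodicTransport

lemma aemeasurable_comp_of_continuousOn {X Y : Type*} [MeasurableSpace X] [TopologicalSpace Y]
    [MeasurableSpace Y] [OpensMeasurableSpace Y] {μ : Measure X} {S : Set Y} {f : Y → ℝ}
    {φ : X → Y} (hf : ContinuousOn f S) (hS : MeasurableSet S) (hφ : AEMeasurable φ μ)
    (hφ_mem : ∀ᵐ z ∂μ, φ z ∈ S) : AEMeasurable (fun z => f (φ z)) μ := by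
  have map_eq : (μ.map φ).restrict S = μ.map φ :=
    Measure.restrict_eq_self_of_ae_mem ((ae_map_iff hφ hS).2 hφ_mem)
  exact (map_eq ▸ hf.aemeasurable hS : AEMeasurable f (μ.map φ)).comp_aemeasurable hφ

lemma integrable_comp_of_continuousOn_of_isCompact {X Y : Type*} [MeasurableSpace X]
    [TopologicalSpace Y] [T2Space Y] [MeasurableSpace Y] [OpensMeasurableSpace Y] {μ : Measure X}
    [IsFiniteMeasure μ] {S : Set Y} {f : Y → ℝ} {φ : X → Y} (hf : ContinuousOn f S)
    (hS : IsCompact S) (hφ : AEMeasurable φ μ) (hφ_mem : ∀ᵐ z ∂μ, φ z ∈ S) :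
    Integrable (fun z => f (φ z)) μ := by
  obtain ⟨C, hC⟩ := hS.exists_bound_of_continuousOn hf
  exact .of_bound (aemeasurable_comp_of_continuousOn hf hS.measurableSet hφ hφ_mem
    |>.aestronglyMeasurable) C (hφ_mem.mono fun z hz => hC _ hz)

lemma integrable_sign_mul_comp_of_continuousOn {X Y : Type*} [MeasurableSpace X]
    [TopologicalSpace Y] [T2Space Y] [MeasurableSpace Y] [OpensMeasurableSpace Y] {μ : Measure X}
    [IsFiniteMeasure μ] {S : Set Y} {p g : Y → ℝ} {φ : X → Y} (hp : ContinuousOn p S)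
    (hg : ContinuousOn g S) (hS : IsCompact S) (hφ : AEMeasurable φ μ)
    (hφ_mem : ∀ᵐ z ∂μ, φ z ∈ S) :
    Integrable (fun z => (SignType.sign (p (φ z)) : ℝ) * g (φ z)) μ :=
  (integrable_comp_of_continuousOn_of_isCompact hg hS hφ hφ_mem).bdd_mul
    (measurable_coe_sign.comp_aemeasurable
      (aemeasurable_comp_of_continuousOn hp hS.measurableSet hφ hφ_mem)).aestronglyMeasurable
    (.of_forall fun z => abs_coe_sign_le_one (p (φ z)))

lemma integral_comp_fract_add (f : ℝ → ℝ) (c : ℝ) :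
    ∫ x in (0 : ℝ)..1, f (Int.fract (x + c)) = ∫ x in (0 : ℝ)..1, f x := by
  have periodic : Function.Periodic (fun y : ℝ => f (Int.fract y)) 1 := fun y => by
    simp only [Int.fract_add_one]
  calc ∫ x in (0 : ℝ)..1, f (Int.fract (x + c))
      = ∫ y in c..c + 1, f (Int.fract y) := by
        rw [intervalIntegral.integral_comp_add_right (fun y => f (Int.fract y)), zero_add,
          add_comm 1 c]
    _ = ∫ y in (0 : ℝ)..1, f (Int.fract y) := by
        rw [periodic.intervalIntegral_add_eq c 0, zero_add]
    _ = ∫ x in (0 : ℝ)..1, f x :=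
        intervalIntegral.integral_congr_Ioo_of_le zero_le_one fun y hy => by
          rw [Int.fract_eq_self.2 ⟨hy.1.le, hy.2⟩]

variable {p g : ℝ → ℝ → ℝ} {s t : ℝ}

lemma fract_mem_Icc (x : ℝ) : Int.fract x ∈ Icc (0 : ℝ) 1 :=
  ⟨Int.fract_nonneg x, (Int.fract_lt_one x).le⟩

lemma continuousOn_comp_fract_add (hp : ContinuousOn (Function.uncurry p) (Icc s t ×ˢ Icc 0 1))
    (hp_bdry : ∀ r ∈ Icc s t, p r 0 = p r 1) (x : ℝ) :
    ContinuousOn (fun r => p r (Int.fract (x + r))) (Icc s t) := by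
  rw [continuousOn_iff_continuous_domRestrict]
  refine ContinuousOn.comp_fract (f := fun (r : Icc s t) y => p r y) ?_
    (continuous_const.add continuous_subtype_val) fun r => hp_bdry r r.2
  exact hp.comp (f := fun z : Icc s t × ℝ => ((z.1 : ℝ), z.2)) (by fun_prop)
    fun z hz => ⟨z.1.2, hz.2⟩

lemma countable_setOf_fract_add_eq_zero (x : ℝ) : {r : ℝ | Int.fract (x + r) = 0}.Countable := by
  refine (countable_range fun n : ℤ => (n : ℝ) - x).mono fun r hr => ?_
  obtain ⟨n, hn⟩ := Int.fract_eq_zero_iff.1 hr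
  exact ⟨n, by simp only [hn, add_sub_cancel_left]⟩

lemma hasDerivAt_comp_fract_add {x r : ℝ} (hr : r ∈ Ioo s t) (hx : Int.fract (x + r) ≠ 0)
    (hpg : ∀ c, ∀ ρ ∈ Ioo s t, ρ + c ∈ Ioo (0 : ℝ) 1 →
      HasDerivAt (fun ρ' => p ρ' (ρ' + c)) (g ρ (ρ + c)) ρ) :
    HasDerivAt (fun ρ => p ρ (Int.fract (x + ρ))) (g r (Int.fract (x + r))) r := by
  let c : ℝ := x - ⌊x + r⌋
  have fract_eq : Int.fract (x + r) = r + c := by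
    simp only [c, Int.fract]
    ring
  have mem : r + c ∈ Ioo (0 : ℝ) 1 :=
    fract_eq ▸ ⟨(Int.fract_nonneg _).lt_of_ne hx.symm, Int.fract_lt_one _⟩
  have fract_near : ∀ᶠ ρ in 𝓝 r, Int.fract (x + ρ) = ρ + c := by
    have mem_near : ∀ᶠ ρ in 𝓝 r, ρ + c ∈ Ioo (0 : ℝ) 1 :=
      (by fun_prop : Continuous fun ρ : ℝ => ρ + c).continuousAt (isOpen_Ioo.mem_nhds mem)
    filter_upwards [mem_near] with ρ hρ
    refine Int.fract_eq_iff.2 ⟨hρ.1.le, hρ.2, ⌊x + r⌋, ?_⟩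
    simp only [c]
    ring
  rw [fract_eq]
  refine (hpg c r hr mem).congr_of_eventuallyEq ?_
  filter_upwards [fract_near] with ρ hρ
  rw [hρ]

lemma integral_sign_mul_comp_fract_add (hst : s ≤ t)
    (hp : ContinuousOn (Function.uncurry p) (Icc s t ×ˢ Icc 0 1))
    (hg : ContinuousOn (Function.uncurry g) (Icc s t ×ˢ Icc 0 1))
    (hp_bdry : ∀ r ∈ Icc s t, p r 0 = p r 1)
    (hpg : ∀ c, ∀ r ∈ Ioo s t, r + c ∈ Ioo (0 : ℝ) 1 →
      HasDerivAt (fun ρ => p ρ (ρ + c)) (g r (r + c)) r) (x : ℝ) :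
    ∫ r in s..t, (SignType.sign (p r (Int.fract (x + r))) : ℝ) * g r (Int.fract (x + r))
      = |p t (Int.fract (x + t))| - |p s (Int.fract (x + s))| := by
  refine integral_sign_mul_deriv_self (f := fun r => p r (Int.fract (x + r)))
    (f' := fun r => g r (Int.fract (x + r))) hst
    (countable_setOf_fract_add_eq_zero x) (continuousOn_comp_fract_add hp hp_bdry x)
    (fun r hr => hasDerivAt_comp_fract_add hr.1 hr.2 hpg) ?_
  rw [intervalIntegrable_iff_integrableOn_Ioc_of_le hst]
  refine integrable_comp_of_continuousOn_of_isCompact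
    (φ := fun r => (r, Int.fract (x + r))) hg (isCompact_Icc.prod isCompact_Icc)
    (by fun_prop) ?_
  filter_upwards [ae_restrict_mem measurableSet_Ioc] with r hr
  exact ⟨Ioc_subset_Icc_self hr, fract_mem_Icc _⟩

lemma integrable_sign_mul_comp_fract_add
    (hp : ContinuousOn (Function.uncurry p) (Icc s t ×ˢ Icc 0 1))
    (hg : ContinuousOn (Function.uncurry g) (Icc s t ×ˢ Icc 0 1)) :
    Integrable (fun z : ℝ × ℝ => (SignType.sign (p z.2 (Int.fract (z.1 + z.2))) : ℝ)
        * g z.2 (Int.fract (z.1 + z.2)))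
      ((volume.restrict (Ioc 0 1)).prod (volume.restrict (Ioc s t))) := by
  refine integrable_sign_mul_comp_of_continuousOn
    (φ := fun z : ℝ × ℝ => (z.2, Int.fract (z.1 + z.2))) hp hg
    (isCompact_Icc.prod isCompact_Icc) (by fun_prop) ?_
  have time_mem : ∀ᵐ z : ℝ × ℝ ∂(volume.restrict (Ioc 0 1)).prod (volume.restrict (Ioc s t)),
      z.2 ∈ Ioc s t :=
    Measure.quasiMeasurePreserving_snd.ae (ae_restrict_mem measurableSet_Ioc)
  filter_upwards [time_mem] with z hz
  exact ⟨Ioc_subset_Icc_self hz, fract_mem_Icc _⟩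

lemma intervalIntegrable_integral_sign_mul (hst : s ≤ t)
    (hp : ContinuousOn (Function.uncurry p) (Icc s t ×ˢ Icc 0 1))
    (hg : ContinuousOn (Function.uncurry g) (Icc s t ×ˢ Icc 0 1)) :
    IntervalIntegrable (fun r => ∫ y in (0 : ℝ)..1, (SignType.sign (p r y) : ℝ) * g r y)
      volume s t := by
  rw [intervalIntegrable_iff_integrableOn_Ioc_of_le hst]
  refine (integrable_sign_mul_comp_fract_add hp hg).integral_prod_right.congr
    (.of_forall fun r => ?_)
  simp only [← intervalIntegral.integral_of_le (zero_le_one' ℝ)]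
  exact integral_comp_fract_add (fun y => (SignType.sign (p r y) : ℝ) * g r y) r

-- The characteristics of `∂_t + ∂_y` on the circle are `r ↦ fract (x + r)`; the equation is
-- integrated along each of them, then over the starting point `x`.
lemma integral_abs_sub_integral_abs (hst : s ≤ t)
    (hp : ContinuousOn (Function.uncurry p) (Icc s t ×ˢ Icc 0 1))
    (hg : ContinuousOn (Function.uncurry g) (Icc s t ×ˢ Icc 0 1))
    (hp_bdry : ∀ r ∈ Icc s t, p r 0 = p r 1)
    (hpg : ∀ c, ∀ r ∈ Ioo s t, r + c ∈ Ioo (0 : ℝ) 1 →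
      HasDerivAt (fun ρ => p ρ (ρ + c)) (g r (r + c)) r) :
    (∫ y in (0 : ℝ)..1, |p t y|) - ∫ y in (0 : ℝ)..1, |p s y|
      = ∫ r in s..t, ∫ y in (0 : ℝ)..1, (SignType.sign (p r y) : ℝ) * g r y := by
  have integrable_slice (r : ℝ) (hr : r ∈ Icc s t) :
      IntervalIntegrable (fun x => |p r (Int.fract (x + r))|) volume 0 1 := by
    exact (((hp.uncurry_left r hr).comp_fract'' (hp_bdry r hr)).comp
      (continuous_add_const r)).abs.intervalIntegrable 0 1
  calc (∫ y in (0 : ℝ)..1, |p t y|) - ∫ y in (0 : ℝ)..1, |p s y|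
      = ∫ x in (0 : ℝ)..1, (|p t (Int.fract (x + t))| - |p s (Int.fract (x + s))|) := by
        rw [intervalIntegral.integral_sub (integrable_slice t ⟨hst, le_rfl⟩)
          (integrable_slice s ⟨le_rfl, hst⟩), integral_comp_fract_add fun y => |p t y|,
          integral_comp_fract_add fun y => |p s y|]
    _ = ∫ x in (0 : ℝ)..1, ∫ r in s..t,
          (SignType.sign (p r (Int.fract (x + r))) : ℝ) * g r (Int.fract (x + r)) := by
        simp only [integral_sign_mul_comp_fract_add hst hp hg hp_bdry hpg]
    _ = ∫ r in s..t, ∫ x in (0 : ℝ)..1,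
          (SignType.sign (p r (Int.fract (x + r))) : ℝ) * g r (Int.fract (x + r)) := by
        simp only [intervalIntegral.integral_of_le hst,
          intervalIntegral.integral_of_le (zero_le_one' ℝ)]
        exact integral_integral_swap (integrable_sign_mul_comp_fract_add hp hg)
    _ = ∫ r in s..t, ∫ y in (0 : ℝ)..1, (SignType.sign (p r y) : ℝ) * g r y := by
        congr 1 with r
        exact integral_comp_fract_add (fun y => (SignType.sign (p r y) : ℝ) * g r y) r

end PeriodicTransport

section Gronwall

variable {f D : ℝ → ℝ} {a b k : ℝ}

lemma continuousOn_of_sub_eq_integral (hab : a ≤ b) (hD : IntervalIntegrable D volume a b)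
    (hf : ∀ x ∈ Icc a b, f x - f a = ∫ y in a..x, D y) : ContinuousOn f (Icc a b) := by
  have primitive_cont := intervalIntegral.continuousOn_primitive_interval' hD left_mem_uIcc
  rw [uIcc_of_le hab] at primitive_cont
  refine ((continuousOn_const (c := f a)).add primitive_cont).congr fun x hx => ?_
  exact (add_eq_of_eq_sub' (hf x hx).symm).symm

lemma sub_le_mul_of_integrand_le (hD : IntervalIntegrable D volume a b)
    (hf : ∀ x ∈ Icc a b, f x - f a = ∫ y in a..x, D y) {c x z : ℝ} (hax : a ≤ x) (hxz : x ≤ z)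
    (hzb : z ≤ b) (hDc : ∀ y ∈ Icc x z, D y ≤ c) : f z - f x ≤ (z - x) * c := by
  have hD_sub {x₁ x₂ : ℝ} (h₁ : x₁ ∈ Icc a b) (h₂ : x₂ ∈ Icc a b) :
      IntervalIntegrable D volume x₁ x₂ :=
    hD.mono_set (uIcc_subset_uIcc (Icc_subset_uIcc h₁) (Icc_subset_uIcc h₂))
  have hx : x ∈ Icc a b := ⟨hax, hxz.trans hzb⟩
  have hz : z ∈ Icc a b := ⟨hax.trans hxz, hzb⟩
  have ha : a ∈ Icc a b := ⟨le_rfl, hax.trans hx.2⟩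
  calc f z - f x = (f z - f a) - (f x - f a) := by ring
    _ = ∫ y in x..z, D y := by
        rw [hf z hz, hf x hx, intervalIntegral.integral_interval_sub_left (hD_sub ha hz)
          (hD_sub ha hx)]
    _ ≤ ∫ _ in x..z, c := intervalIntegral.integral_mono_on hxz (hD_sub hx hz)
        intervalIntegrable_const hDc
    _ = (z - x) * c := by rw [intervalIntegral.integral_const, smul_eq_mul]

lemma le_mul_exp_of_sub_eq_integral (hab : a ≤ b) (hD : IntervalIntegrable D volume a b)
    (hf : ∀ x ∈ Icc a b, f x - f a = ∫ y in a..x, D y) (hDf : ∀ x ∈ Icc a b, D x ≤ k * f x) :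
    f b ≤ f a * exp (k * (b - a)) := by
  have f_cont := continuousOn_of_sub_eq_integral hab hD hf
  have slope_lt (x : ℝ) (hx : x ∈ Ico a b) (r : ℝ) (hr : k * f x < r) :
      ∀ᶠ z in 𝓝[>] x, (z - x)⁻¹ * (f z - f x) < r := by
    obtain ⟨c, hxc, hcr⟩ := exists_between hr
    have f_cont_right : ContinuousWithinAt f (Ici x) x :=
      (f_cont x (Ico_subset_Icc_self hx)).mono_of_mem_nhdsWithin
        (mem_of_superset (Icc_mem_nhdsGE hx.2) (Icc_subset_Icc_left hx.1))
    obtain ⟨u, hxu, hu⟩ := mem_nhdsGE_iff_exists_Icc_subset.1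
      ((f_cont_right.const_mul k).eventually_lt_const hxc)
    filter_upwards [Ioo_mem_nhdsGT (lt_min hxu hx.2)] with z hz
    have hzu : z < u := hz.2.trans_le (min_le_left u b)
    have hzb : z < b := hz.2.trans_le (min_le_right u b)
    have hzx : 0 < z - x := sub_pos.2 hz.1
    have increment_le : f z - f x ≤ (z - x) * c :=
      sub_le_mul_of_integrand_le hD hf hx.1 hz.1.le hzb.le fun y hy =>
        (hDf y ⟨hx.1.trans hy.1, hy.2.trans hzb.le⟩).trans
          (le_of_lt (hu ⟨hy.1, hy.2.trans hzu.le⟩))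
    exact ((inv_mul_le_iff₀ hzx).2 increment_le).trans_lt hcr
  have bound := le_gronwallBound_of_liminf_deriv_right_le (ε := 0) f_cont
    (fun x hx r hr => (slope_lt x hx r hr).frequently) le_rfl
    (fun x _ => (add_zero (k * f x)).ge) b ⟨hab, le_rfl⟩
  rwa [gronwallBound_ε0] at bound

end Gronwall

section MixedPartials

variable {F f : ℝ → ℝ → ℝ} {Fy : ℝ → ℝ} {f' : ℝ × ℝ → ℝ} {r₀ y₀ : ℝ}

lemma tendsto_slope_of_continuousAt_partial
    (hf : ∀ᶠ z : ℝ × ℝ in 𝓝 (r₀, y₀), HasDerivAt (f z.1) (f' z) z.2)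
    (hf' : ContinuousAt f' (r₀, y₀)) :
    Tendsto (fun z : ℝ × ℝ => slope (f z.2) y₀ z.1) (𝓝[≠] y₀ ×ˢ 𝓝 r₀) (𝓝 (f' (r₀, y₀))) := by
  refine Metric.tendsto_nhds.2 fun ε hε => ?_
  obtain ⟨δ, hδ, near⟩ := Metric.eventually_nhds_iff_ball.1
    (hf.and (Metric.tendsto_nhds.1 hf' (ε / 2) (half_pos hε)))
  rw [← ball_prod_same] at near
  filter_upwards [prod_mem_prod (inter_mem (mem_nhdsWithin_of_mem_nhds (Metric.ball_mem_nhds y₀ hδ))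
    self_mem_nhdsWithin) (Metric.ball_mem_nhds r₀ hδ)]
  rintro ⟨y, r⟩ ⟨⟨hy, hy_ne⟩, hr⟩
  have hy_sub : 0 < |y - y₀| := abs_pos.2 (sub_ne_zero.2 hy_ne)
  have mean_value : ‖(f r y - f' (r₀, y₀) * y) - (f r y₀ - f' (r₀, y₀) * y₀)‖
      ≤ ε / 2 * ‖y - y₀‖ :=
    (convex_ball y₀ δ).norm_image_sub_le_of_norm_hasDerivWithin_le
      (f := fun x => f r x - f' (r₀, y₀) * x) (f' := fun x => f' (r, x) - f' (r₀, y₀) * 1)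
      (fun x hx => ((near (r, x) ⟨hr, hx⟩).1.sub
        ((hasDerivAt_id x).const_mul _)).hasDerivWithinAt)
      (fun x hx => by rw [mul_one]; exact (near (r, x) ⟨hr, hx⟩).2.le)
      (Metric.mem_ball_self hδ) hy
  have slope_sub : slope (f r) y₀ y - f' (r₀, y₀)
      = ((f r y - f' (r₀, y₀) * y) - (f r y₀ - f' (r₀, y₀) * y₀)) / (y - y₀) := by
    rw [slope_def_field, eq_div_iff (sub_ne_zero.2 hy_ne), sub_mul,
      div_mul_cancel₀ _ (sub_ne_zero.2 hy_ne)]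
    ring
  rw [Real.dist_eq, slope_sub, abs_div, div_lt_iff₀ hy_sub]
  exact mean_value.trans_lt (mul_lt_mul_of_pos_right (half_lt_self hε) hy_sub)

lemma hasDerivAt_partial_of_continuousAt_mixed_partial
    (hF : ∀ᶠ z : ℝ × ℝ in 𝓝 (r₀, y₀), HasDerivAt (fun r => F r z.2) (f z.1 z.2) z.1)
    (hFy : ∀ᶠ r in 𝓝 r₀, HasDerivAt (F r) (Fy r) y₀)
    (hf : ∀ᶠ z : ℝ × ℝ in 𝓝 (r₀, y₀), HasDerivAt (f z.1) (f' z) z.2)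
    (hf' : ContinuousAt f' (r₀, y₀)) : HasDerivAt Fy (f' (r₀, y₀)) r₀ := by
  refine hasDerivAt_of_tendstoUniformlyOnFilter (l := 𝓝[≠] y₀)
    (f := fun y r => slope (F r) y₀ y) (f' := fun y r => slope (f r) y₀ y)
    (g' := fun _ => f' (r₀, y₀))
    (tendsto_prod_filter_iff.1 (tendsto_slope_of_continuousAt_partial hf hf')) ?_
    (hFy.mono fun r hr => hasDerivAt_iff_tendsto_slope.1 hr)
  obtain ⟨δ, hδ, near⟩ := Metric.eventually_nhds_iff_ball.1 hF
  rw [← ball_prod_same] at near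
  filter_upwards [prod_mem_prod (mem_nhdsWithin_of_mem_nhds (Metric.ball_mem_nhds y₀ hδ))
    (Metric.ball_mem_nhds r₀ hδ)]
  rintro ⟨y, r⟩ ⟨hy, hr⟩
  exact ((near (r, y) ⟨hr, hy⟩).sub (near (r, y₀) ⟨hr, Metric.mem_ball_self hδ⟩)).const_smul
    (y - y₀)⁻¹

end MixedPartials

section PartialDerivatives

variable {T : ℝ≥0∞} {Q : ℝ → ℝ → ℝ} {s x : ℝ}

lemma isOpen_setOf_ofReal_lt (T : ℝ≥0∞) : IsOpen {τ : ℝ | ENNReal.ofReal τ < T} :=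
  isOpen_lt ENNReal.continuous_ofReal continuous_const

lemma uniqueDiffOn_Ico0 (T : ℝ≥0∞) : UniqueDiffOn ℝ (Ico0 T) :=
  (uniqueDiffOn_Ici 0).inter (isOpen_setOf_ofReal_lt T)

lemma Ico0_mem_nhdsWithin_Ici (hs : s ∈ Ico0 T) : Ico0 T ∈ 𝓝[Ici 0] s :=
  inter_mem self_mem_nhdsWithin (mem_nhdsWithin_of_mem_nhds
    ((isOpen_setOf_ofReal_lt T).mem_nhds hs.2))

lemma Icc_subset_Ico0 (hs : s ∈ Ico0 T) : Icc 0 s ⊆ Ico0 T :=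
  fun _ hr => ⟨hr.1, (ENNReal.ofReal_le_ofReal hr.2).trans_lt hs.2⟩

lemma uniqueDiffOn_Ico0_prod (T : ℝ≥0∞) : UniqueDiffOn ℝ (Ico0 T ×ˢ Icc (0 : ℝ) 1) :=
  (uniqueDiffOn_Ico0 T).prod (uniqueDiffOn_Icc one_pos)

lemma hasFDerivWithinAt_uncurry (hQ : ContDiffOn ℝ 1 (Function.uncurry Q) (Ico0 T ×ˢ Icc 0 1))
    (hs : s ∈ Ico0 T) (hx : x ∈ Icc (0 : ℝ) 1) :
    HasFDerivWithinAt (Function.uncurry Q)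
      (fderivWithin ℝ (Function.uncurry Q) (Ico0 T ×ˢ Icc 0 1) (s, x)) (Ico0 T ×ˢ Icc 0 1) (s, x) :=
  (hQ.differentiableOn one_ne_zero (s, x) ⟨hs, hx⟩).hasFDerivWithinAt

lemma hasDerivWithinAt_Icc_fderivWithin
    (hQ : ContDiffOn ℝ 1 (Function.uncurry Q) (Ico0 T ×ˢ Icc 0 1))
    (hs : s ∈ Ico0 T) (hx : x ∈ Icc (0 : ℝ) 1) :
    HasDerivWithinAt (Q s)
      (fderivWithin ℝ (Function.uncurry Q) (Ico0 T ×ˢ Icc 0 1) (s, x) (0, 1)) (Icc 0 1) x :=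
  (hasFDerivWithinAt_uncurry hQ hs hx).comp_hasDerivWithinAt (f := fun y => (s, y)) x
    ((hasDerivWithinAt_const x (Icc 0 1) s).prodMk (hasDerivWithinAt_id x _))
    fun _ hy => ⟨hs, hy⟩

lemma pdEta_eq_fderivWithin (hQ : ContDiffOn ℝ 1 (Function.uncurry Q) (Ico0 T ×ˢ Icc 0 1))
    (hs : s ∈ Ico0 T) (hx : x ∈ Icc (0 : ℝ) 1) :
    pdEta Q s x = fderivWithin ℝ (Function.uncurry Q) (Ico0 T ×ˢ Icc 0 1) (s, x) (0, 1) :=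
  (hasDerivWithinAt_Icc_fderivWithin hQ hs hx).derivWithin (uniqueDiffOn_Icc one_pos x hx)

lemma hasDerivWithinAt_pdEta (hQ : ContDiffOn ℝ 1 (Function.uncurry Q) (Ico0 T ×ˢ Icc 0 1))
    (hs : s ∈ Ico0 T) (hx : x ∈ Icc (0 : ℝ) 1) :
    HasDerivWithinAt (Q s) (pdEta Q s x) (Icc 0 1) x :=
  (hasDerivWithinAt_Icc_fderivWithin hQ hs hx).differentiableWithinAt.hasDerivWithinAt

lemma hasDerivWithinAt_Ici_fderivWithin
    (hQ : ContDiffOn ℝ 1 (Function.uncurry Q) (Ico0 T ×ˢ Icc 0 1))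
    (hs : s ∈ Ico0 T) (hx : x ∈ Icc (0 : ℝ) 1) :
    HasDerivWithinAt (fun r => Q r x)
      (fderivWithin ℝ (Function.uncurry Q) (Ico0 T ×ˢ Icc 0 1) (s, x) (1, 0)) (Ici 0) s :=
  ((hasFDerivWithinAt_uncurry hQ hs hx).comp_hasDerivWithinAt (f := fun r => (r, x)) s
    ((hasDerivWithinAt_id s (Ico0 T)).prodMk (hasDerivWithinAt_const s _ x))
    fun _ hr => ⟨hr, hx⟩).mono_of_mem_nhdsWithin (Ico0_mem_nhdsWithin_Ici hs)

lemma pdTau_eq_fderivWithin (hQ : ContDiffOn ℝ 1 (Function.uncurry Q) (Ico0 T ×ˢ Icc 0 1))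
    (hs : s ∈ Ico0 T) (hx : x ∈ Icc (0 : ℝ) 1) :
    pdTau Q s x = fderivWithin ℝ (Function.uncurry Q) (Ico0 T ×ˢ Icc 0 1) (s, x) (1, 0) :=
  (hasDerivWithinAt_Ici_fderivWithin hQ hs hx).derivWithin (uniqueDiffOn_Ici 0 s hs.1)

lemma hasDerivWithinAt_pdTau (hQ : ContDiffOn ℝ 1 (Function.uncurry Q) (Ico0 T ×ˢ Icc 0 1))
    (hs : s ∈ Ico0 T) (hx : x ∈ Icc (0 : ℝ) 1) :
    HasDerivWithinAt (fun r => Q r x) (pdTau Q s x) (Ici 0) s :=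
  (hasDerivWithinAt_Ici_fderivWithin hQ hs hx).differentiableWithinAt.hasDerivWithinAt

lemma continuousOn_fderivWithin_apply
    (hQ : ContDiffOn ℝ 1 (Function.uncurry Q) (Ico0 T ×ˢ Icc 0 1)) (w : ℝ × ℝ) :
    ContinuousOn (fun z => fderivWithin ℝ (Function.uncurry Q) (Ico0 T ×ˢ Icc 0 1) z w)
      (Ico0 T ×ˢ Icc 0 1) :=
  (hQ.continuousOn_fderivWithin (uniqueDiffOn_Ico0_prod T) le_rfl).clm_apply continuousOn_const

lemma continuousOn_pdEta (hQ : ContDiffOn ℝ 1 (Function.uncurry Q) (Ico0 T ×ˢ Icc 0 1)) :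
    ContinuousOn (Function.uncurry (pdEta Q)) (Ico0 T ×ˢ Icc 0 1) :=
  (continuousOn_fderivWithin_apply hQ (0, 1)).congr fun _ hz =>
    pdEta_eq_fderivWithin hQ hz.1 hz.2

lemma continuousOn_pdTau (hQ : ContDiffOn ℝ 1 (Function.uncurry Q) (Ico0 T ×ˢ Icc 0 1)) :
    ContinuousOn (Function.uncurry (pdTau Q)) (Ico0 T ×ˢ Icc 0 1) :=
  (continuousOn_fderivWithin_apply hQ (1, 0)).congr fun _ hz =>
    pdTau_eq_fderivWithin hQ hz.1 hz.2

lemma hasDerivAt_pdTau_add_pdEta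
    (hQ : ContDiffOn ℝ 1 (Function.uncurry Q) (Ico0 T ×ˢ Icc 0 1)) {c : ℝ}
    (hs : s ∈ interior (Ico0 T)) (hc : s + c ∈ Ioo (0 : ℝ) 1) :
    HasDerivAt (fun r => Q r (r + c)) (pdTau Q s (s + c) + pdEta Q s (s + c)) s := by
  have hs' := interior_subset hs
  have hc' := Ioo_subset_Icc_self hc
  have domain_mem_nhds : Ico0 T ×ˢ Icc (0 : ℝ) 1 ∈ 𝓝 (s, s + c) :=
    prod_mem_nhds (mem_interior_iff_mem_nhds.1 hs) (Icc_mem_nhds hc.1 hc.2)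
  rw [pdTau_eq_fderivWithin hQ hs' hc', pdEta_eq_fderivWithin hQ hs' hc', ← map_add,
    Prod.mk_add_mk, add_zero, zero_add]
  exact ((hasFDerivWithinAt_uncurry hQ hs' hc').hasFDerivAt domain_mem_nhds).comp_hasDerivAt
    (f := fun r => (r, r + c)) s ((hasDerivAt_id s).prodMk ((hasDerivAt_id s).add_const c))

end PartialDerivatives

lemma eq_equilibrium_of_hasDerivWithinAt {w f : ℝ → ℝ} {a b c : ℝ} (hw : ContDiff ℝ 1 w)
    (hwc : w c = 0) (hf : ContinuousOn f (Icc a b))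
    (hf' : ∀ t ∈ Ico a b, HasDerivWithinAt f (w (f t)) (Ici t) t) (hfa : f a = c) {t : ℝ}
    (ht : t ∈ Icc a b) : f t = c := by
  obtain ⟨R, hR⟩ := isCompact_Icc.exists_bound_of_continuousOn hf
  have hf_mem (r : ℝ) (hr : r ∈ Icc a b) : f r ∈ Icc (-R) R := abs_le.1 (hR r hr)
  obtain ⟨L, hL⟩ := hw.contDiffOn.exists_lipschitzOnWith one_ne_zero (convex_Icc (-R) R)
    isCompact_Icc
  refine ODE_solution_unique_of_mem_Icc_right (v := fun _ => w) (g := fun _ => c)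
    (fun _ _ => hL) hf hf' (fun r hr => hf_mem r (Ico_subset_Icc_self hr)) continuousOn_const
    (fun r _ => ?_) (fun _ _ => ?_) hfa ht
  · rw [hwc]
    exact hasDerivWithinAt_const r _ c
  · exact hfa ▸ hf_mem a (left_mem_Icc.2 (ht.1.trans ht.2))

namespace IsRelaxedSol

variable {K : ℝ → ℝ} {ΦF : ℝ} {T : ℝ≥0∞} {Qinit N : ℝ → ℝ} {Q : ℝ → ℝ → ℝ} {s : ℝ}

lemma pde_Icc (h : IsRelaxedSol K ΦF T Qinit Q N) (hK : Continuous K) (hs : s ∈ Ico0 T) {x : ℝ}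
    (hx : x ∈ Icc (0 : ℝ) 1) : pdTau Q s x + pdEta Q s x = N s + K (Q s x) := by
  have eqOn : EqOn (fun x => pdTau Q s x + pdEta Q s x) (fun x => N s + K (Q s x)) (Icc 0 1) := by
    refine Set.EqOn.of_subset_closure (s := Ioo 0 1) (h.pde s hs) ?_ ?_ Ioo_subset_Icc_self
      (closure_Ioo zero_ne_one).ge
    · exact ((continuousOn_pdTau h.reg).uncurry_left s hs).add
        ((continuousOn_pdEta h.reg).uncurry_left s hs)
    · exact continuousOn_const.add (hK.comp_continuousOn (h.reg.continuousOn.uncurry_left s hs))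
  exact eqOn hx

lemma pdTau_zero (h : IsRelaxedSol K ΦF T Qinit Q N) (hs : s ∈ Ico0 T) : pdTau Q s 0 = 0 := by
  have bc_near : (fun r => Q r 0) =ᶠ[𝓝[Ici 0] s] fun _ => 0 :=
    eventually_of_mem (Ico0_mem_nhdsWithin_Ici hs) h.bc
  rw [pdTau, bc_near.derivWithin_eq (h.bc s hs), derivWithin_fun_const, Pi.zero_apply]

lemma pdEta_one_sub_pdEta_zero (h : IsRelaxedSol K ΦF T Qinit Q N) (hK : Continuous K)
    (hs : s ∈ Ico0 T) : pdEta Q s 1 - pdEta Q s 0 = K ΦF - K 0 := by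
  have pde_zero := h.pde_Icc hK hs (left_mem_Icc.2 zero_le_one)
  rw [h.pdTau_zero hs, h.bc s hs, h.Ndef s hs] at pde_zero
  linarith

lemma pdTau_one (h : IsRelaxedSol K ΦF T Qinit Q N) (hK : Continuous K) (hs : s ∈ Ico0 T) :
    pdTau Q s 1 = K (Q s 1) - K ΦF := by
  have pde_one := h.pde_Icc hK hs (right_mem_Icc.2 zero_le_one)
  rw [h.Ndef s hs] at pde_one
  linarith

lemma apply_one (h : IsRelaxedSol K ΦF T Qinit Q N) (hK : ContDiff ℝ 1 K) (hs : s ∈ Ico0 T) :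
    Q s 1 = ΦF := by
  have hsub := Icc_subset_Ico0 hs
  have one_mem : (1 : ℝ) ∈ Icc (0 : ℝ) 1 := right_mem_Icc.2 zero_le_one
  refine eq_equilibrium_of_hasDerivWithinAt (w := fun y => K y - K ΦF) (f := fun r => Q r 1)
    (a := 0) (b := s) (hK.sub contDiff_const) (sub_self _) ?_ ?_ ?_ ⟨hs.1, le_rfl⟩
  · exact (h.reg.continuousOn.uncurry_right 1 one_mem).mono hsub
  · intro r hr
    have hr' := hsub (Ico_subset_Icc_self hr)
    rw [← h.pdTau_one hK.continuous hr']
    exact (hasDerivWithinAt_pdTau h.reg hr' one_mem).mono (Ici_subset_Ici.2 hr.1)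
  · rw [h.init 1 one_mem, h.init1]

lemma isMonotoneProfile (h : IsRelaxedSol K ΦF T Qinit Q N) (hK : ContDiff ℝ 1 K)
    (hs : s ∈ Ico0 T) (hmono : MonotoneOn (Q s) (Icc 0 1)) :
    IsMonotoneProfile 0 1 0 ΦF (Q s) (pdEta Q s) where
  hasDerivWithinAt _ hx := hasDerivWithinAt_pdEta h.reg hs hx
  continuousOn_deriv := (continuousOn_pdEta h.reg).uncurry_left s hs
  deriv_nonneg _ _ := hmono.derivWithin_nonneg
  eq_left := h.bc s hs
  eq_right := h.apply_one hK hs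

lemma continuousOn_deriv_comp_mul_pdEta (h : IsRelaxedSol K ΦF T Qinit Q N) (hK : ContDiff ℝ 1 K) :
    ContinuousOn (fun z : ℝ × ℝ => deriv K (Q z.1 z.2) * pdEta Q z.1 z.2)
      (Ico0 T ×ˢ Icc (0 : ℝ) 1) :=
  ((hK.continuous_deriv le_rfl).comp_continuousOn h.reg.continuousOn).mul (continuousOn_pdEta h.reg)

lemma hasDerivAt_pdEta_characteristic (h : IsRelaxedSol K ΦF T Qinit Q N) (hK : ContDiff ℝ 1 K)
    {c : ℝ} (hs : s ∈ interior (Ico0 T)) (hc : s + c ∈ Ioo (0 : ℝ) 1) :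
    HasDerivAt (fun r => pdEta Q r (r + c)) (deriv K (Q s (s + c)) * pdEta Q s (s + c)) s := by
  have domain_open : IsOpen {z : ℝ × ℝ | z.1 ∈ interior (Ico0 T) ∧ z.1 + z.2 ∈ Ioo (0 : ℝ) 1} :=
    (isOpen_interior.preimage continuous_fst).inter
      (isOpen_Ioo.preimage (continuous_fst.add continuous_snd))
  have domain_near : ∀ᶠ z : ℝ × ℝ in 𝓝 (s, c),
      z.1 ∈ interior (Ico0 T) ∧ z.1 + z.2 ∈ Ioo (0 : ℝ) 1 := domain_open.mem_nhds ⟨hs, hc⟩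
  have hasDerivAt_shift {r y : ℝ} (hr : r ∈ interior (Ico0 T)) (hy : r + y ∈ Ioo (0 : ℝ) 1) :
      HasDerivAt (fun x => Q r (r + x)) (pdEta Q r (r + y)) y :=
    ((hasDerivWithinAt_pdEta h.reg (interior_subset hr) (Ioo_subset_Icc_self hy)).hasDerivAt
      (Icc_mem_nhds hy.1 hy.2)).comp_const_add r y
  refine hasDerivAt_partial_of_continuousAt_mixed_partial (F := fun r y => Q r (r + y))
    (f := fun r y => N r + K (Q r (r + y))) (r₀ := s) (y₀ := c)
    (f' := fun z => deriv K (Q z.1 (z.1 + z.2)) * pdEta Q z.1 (z.1 + z.2)) ?_ ?_ ?_ ?_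
  · filter_upwards [domain_near] with z hz
    rw [← h.pde z.1 (interior_subset hz.1) _ hz.2]
    exact hasDerivAt_pdTau_add_pdEta h.reg hz.1 hz.2
  · filter_upwards [(by fun_prop : Continuous fun r : ℝ => (r, c)).continuousAt domain_near]
      with r hr
    exact hasDerivAt_shift hr.1 hr.2
  · filter_upwards [domain_near] with z hz
    exact ((hK.differentiable one_ne_zero _).hasDerivAt.comp z.2
      (hasDerivAt_shift hz.1 hz.2)).const_add (N z.1)
  · have rectangle_near : Ico0 T ×ˢ Icc (0 : ℝ) 1 ∈ 𝓝 (s, s + c) :=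
      prod_mem_nhds (mem_interior_iff_mem_nhds.1 hs) (Icc_mem_nhds hc.1 hc.2)
    exact ((h.continuousOn_deriv_comp_mul_pdEta hK).continuousAt rectangle_near).comp
      (f := fun z : ℝ × ℝ => (z.1, z.1 + z.2)) (x := (s, c)) (by fun_prop)

end IsRelaxedSol

lemma IsQSol.isRelaxedSol {K : ℝ → ℝ} {ΦF : ℝ} {T : ℝ≥0∞} {Qinit N : ℝ → ℝ} {Q : ℝ → ℝ → ℝ}
    (h : IsQSol K ΦF T Qinit Q N) : IsRelaxedSol K ΦF T Qinit Q fun s => 1 / N s where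
  initReg := h.initReg
  init0 := h.init0
  init1 := h.init1
  reg := h.reg
  Ncont := continuousOn_const.div h.Ncont fun s hs => (h.Npos s hs).ne'
  pde := h.pde
  bc := h.bc
  Ndef := h.Ndef
  init := h.init

namespace IsRelaxedSol

variable {K : ℝ → ℝ} {ΦF : ℝ} {T₁ T₂ : ℝ≥0∞} {Qinit₁ Qinit₂ N₁ N₂ : ℝ → ℝ} {Q₁ Q₂ : ℝ → ℝ → ℝ}
  {t : ℝ}

lemma continuousOn_pdEta_sub (h₁ : IsRelaxedSol K ΦF T₁ Qinit₁ Q₁ N₁)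
    (h₂ : IsRelaxedSol K ΦF T₂ Qinit₂ Q₂ N₂) (ht₁ : t ∈ Ico0 T₁) (ht₂ : t ∈ Ico0 T₂) :
    ContinuousOn (Function.uncurry fun r y => pdEta Q₁ r y - pdEta Q₂ r y)
      (Icc 0 t ×ˢ Icc 0 1) :=
  ((continuousOn_pdEta h₁.reg).mono (prod_mono_left (Icc_subset_Ico0 ht₁))).sub
    ((continuousOn_pdEta h₂.reg).mono (prod_mono_left (Icc_subset_Ico0 ht₂)))

lemma continuousOn_deriv_comp_mul_pdEta_sub (h₁ : IsRelaxedSol K ΦF T₁ Qinit₁ Q₁ N₁)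
    (h₂ : IsRelaxedSol K ΦF T₂ Qinit₂ Q₂ N₂) (hK : ContDiff ℝ 1 K) (ht₁ : t ∈ Ico0 T₁)
    (ht₂ : t ∈ Ico0 T₂) :
    ContinuousOn (Function.uncurry fun r y =>
        deriv K (Q₁ r y) * pdEta Q₁ r y - deriv K (Q₂ r y) * pdEta Q₂ r y)
      (Icc 0 t ×ˢ Icc 0 1) :=
  ((h₁.continuousOn_deriv_comp_mul_pdEta hK).mono (prod_mono_left (Icc_subset_Ico0 ht₁))).sub
    ((h₂.continuousOn_deriv_comp_mul_pdEta hK).mono (prod_mono_left (Icc_subset_Ico0 ht₂)))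

lemma intervalIntegrable_integral_sign_mul_pdEta_sub (h₁ : IsRelaxedSol K ΦF T₁ Qinit₁ Q₁ N₁)
    (h₂ : IsRelaxedSol K ΦF T₂ Qinit₂ Q₂ N₂) (hK : ContDiff ℝ 1 K) (ht₁ : t ∈ Ico0 T₁)
    (ht₂ : t ∈ Ico0 T₂) :
    IntervalIntegrable (fun r => ∫ y in (0 : ℝ)..1,
      (SignType.sign (pdEta Q₁ r y - pdEta Q₂ r y) : ℝ)
        * (deriv K (Q₁ r y) * pdEta Q₁ r y - deriv K (Q₂ r y) * pdEta Q₂ r y)) volume 0 t :=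
  intervalIntegrable_integral_sign_mul ht₁.1 (h₁.continuousOn_pdEta_sub h₂ ht₁ ht₂)
    (h₁.continuousOn_deriv_comp_mul_pdEta_sub h₂ hK ht₁ ht₂)

lemma integral_abs_pdEta_sub_sub_eq_integral (h₁ : IsRelaxedSol K ΦF T₁ Qinit₁ Q₁ N₁)
    (h₂ : IsRelaxedSol K ΦF T₂ Qinit₂ Q₂ N₂) (hK : ContDiff ℝ 1 K) (ht₁ : t ∈ Ico0 T₁)
    (ht₂ : t ∈ Ico0 T₂) :
    (∫ y in (0 : ℝ)..1, |pdEta Q₁ t y - pdEta Q₂ t y|)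
        - ∫ y in (0 : ℝ)..1, |pdEta Q₁ 0 y - pdEta Q₂ 0 y|
      = ∫ r in (0 : ℝ)..t, ∫ y in (0 : ℝ)..1,
          (SignType.sign (pdEta Q₁ r y - pdEta Q₂ r y) : ℝ)
            * (deriv K (Q₁ r y) * pdEta Q₁ r y - deriv K (Q₂ r y) * pdEta Q₂ r y) := by
  have Ioo_subset_interior {T : ℝ≥0∞} (ht : t ∈ Ico0 T) : Ioo 0 t ⊆ interior (Ico0 T) :=
    interior_maximal (Ioo_subset_Icc_self.trans (Icc_subset_Ico0 ht)) isOpen_Ioo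
  refine integral_abs_sub_integral_abs (p := fun r y => pdEta Q₁ r y - pdEta Q₂ r y)
    (g := fun r y => deriv K (Q₁ r y) * pdEta Q₁ r y - deriv K (Q₂ r y) * pdEta Q₂ r y)
    ht₁.1 (h₁.continuousOn_pdEta_sub h₂ ht₁ ht₂)
    (h₁.continuousOn_deriv_comp_mul_pdEta_sub h₂ hK ht₁ ht₂) ?_ ?_
  · intro r hr
    linarith [h₁.pdEta_one_sub_pdEta_zero hK.continuous (Icc_subset_Ico0 ht₁ hr),
      h₂.pdEta_one_sub_pdEta_zero hK.continuous (Icc_subset_Ico0 ht₂ hr)]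
  · intro c r hr hc
    exact (h₁.hasDerivAt_pdEta_characteristic hK (Ioo_subset_interior ht₁ hr) hc).sub
      (h₂.hasDerivAt_pdEta_characteristic hK (Ioo_subset_interior ht₂ hr) hc)

end IsRelaxedSol

theorem stmt7_general {K : ℝ → ℝ} {ΦF : ℝ} (hK : ContDiff ℝ 2 K) {T₁ T₂ : ℝ≥0∞}
    {Qinit₁ Qinit₂ N₁ N₂ : ℝ → ℝ} {Q₁ Q₂ : ℝ → ℝ → ℝ}
    (h₁ : IsRelaxedSol K ΦF T₁ Qinit₁ Q₁ N₁) (h₂ : IsRelaxedSol K ΦF T₂ Qinit₂ Q₂ N₂)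
    (mono₁ : ∀ s ∈ Ico0 T₁, MonotoneOn (Q₁ s) (Icc 0 1))
    (mono₂ : ∀ s ∈ Ico0 T₂, MonotoneOn (Q₂ s) (Icc 0 1)) {τ : ℝ} (hτ₁ : τ ∈ Ico0 T₁)
    (hτ₂ : τ ∈ Ico0 T₂) :
    exp (kmin K ΦF * τ) * (∫ η in (0 : ℝ)..1, |pdEta Q₁ 0 η - pdEta Q₂ 0 η|)
      ≤ (∫ η in (0 : ℝ)..1, |pdEta Q₁ τ η - pdEta Q₂ τ η|) ∧
    (∫ η in (0 : ℝ)..1, |pdEta Q₁ τ η - pdEta Q₂ τ η|)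
      ≤ exp (kmax K ΦF * τ) * ∫ η in (0 : ℝ)..1, |pdEta Q₁ 0 η - pdEta Q₂ 0 η| := by
  have hK₁ : ContDiff ℝ 1 K := hK.of_le one_le_two
  let J : ℝ → ℝ := fun t => ∫ η in (0 : ℝ)..1, |pdEta Q₁ t η - pdEta Q₂ t η|
  let D : ℝ → ℝ := fun t => ∫ η in (0 : ℝ)..1, (SignType.sign (pdEta Q₁ t η - pdEta Q₂ t η) : ℝ)
    * (deriv K (Q₁ t η) * pdEta Q₁ t η - deriv K (Q₂ t η) * pdEta Q₂ t η)
  have D_integrable : IntervalIntegrable D volume 0 τ :=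
    h₁.intervalIntegrable_integral_sign_mul_pdEta_sub h₂ hK₁ hτ₁ hτ₂
  have J_sub (t : ℝ) (ht : t ∈ Icc 0 τ) : J t - J 0 = ∫ r in (0 : ℝ)..t, D r :=
    h₁.integral_abs_pdEta_sub_sub_eq_integral h₂ hK₁ (Icc_subset_Ico0 hτ₁ ht)
      (Icc_subset_Ico0 hτ₂ ht)
  have D_mem (t : ℝ) (ht : t ∈ Icc 0 τ) : D t ∈ Icc (kmin K ΦF * J t) (kmax K ΦF * J t) :=
    (h₁.isMonotoneProfile hK₁ (Icc_subset_Ico0 hτ₁ ht) (mono₁ t (Icc_subset_Ico0 hτ₁ ht)))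
      |>.integral_sign_mul_deriv_comp_sub_mem_Icc hK
        (h₂.isMonotoneProfile hK₁ (Icc_subset_Ico0 hτ₂ ht) (mono₂ t (Icc_subset_Ico0 hτ₂ ht)))
        zero_le_one
  have upper : J τ ≤ J 0 * exp (kmax K ΦF * (τ - 0)) :=
    le_mul_exp_of_sub_eq_integral hτ₁.1 D_integrable J_sub fun t ht => (D_mem t ht).2
  have lower : -J τ ≤ -J 0 * exp (kmin K ΦF * (τ - 0)) := by
    refine le_mul_exp_of_sub_eq_integral (f := fun t => -J t) hτ₁.1 D_integrable.neg
      (fun t ht => ?_) fun t ht => ?_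
    · simp only [Pi.neg_apply, intervalIntegral.integral_neg, ← J_sub t ht]
      ring
    · rw [mul_neg]
      exact neg_le_neg (D_mem t ht).1
  rw [sub_zero, mul_comm] at upper
  rw [sub_zero, neg_mul, neg_le_neg_iff, mul_comm] at lower
  exact ⟨lower, upper⟩

/-- Theorem 4.1 (key stability / BV estimate): contraction-expansion bounds in the
`L¹`-distance between spatial derivatives of two classical solutions. -/
theorem stmt7 (ΦF : ℝ) (hΦF : 0 < ΦF) (K : ℝ → ℝ) (hK : KAssump K ΦF)
    (T₁ T₂ : ℝ≥0∞) (Qinit₁ Qinit₂ : ℝ → ℝ) (Q₁ Q₂ : ℝ → ℝ → ℝ) (N₁ N₂ : ℝ → ℝ)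
    (h1 : IsQSol K ΦF T₁ Qinit₁ Q₁ N₁) (h2 : IsQSol K ΦF T₂ Qinit₂ Q₂ N₂)
    (τ : ℝ) (hτ0 : 0 ≤ τ) (hτ1 : ENNReal.ofReal τ < T₁) (hτ2 : ENNReal.ofReal τ < T₂) :
    Real.exp (kmin K ΦF * τ) * (∫ η in (0 : ℝ)..1, |pdEta Q₁ 0 η - pdEta Q₂ 0 η|)
      ≤ (∫ η in (0 : ℝ)..1, |pdEta Q₁ τ η - pdEta Q₂ τ η|) ∧
    (∫ η in (0 : ℝ)..1, |pdEta Q₁ τ η - pdEta Q₂ τ η|)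
      ≤ Real.exp (kmax K ΦF * τ) * ∫ η in (0 : ℝ)..1, |pdEta Q₁ 0 η - pdEta Q₂ 0 η| := by
  exact stmt7_general hK.smooth h1.isRelaxedSol h2.isRelaxedSol h1.mono h2.mono ⟨hτ0, hτ1⟩
    ⟨hτ0, hτ2⟩
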